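/- Let U be a simply connected open subset of ℂ and let A : U → Matrix (Fin n) (Fin n) ℂ be holomorphic (entrywise). Then the set of holomorphic solutions Y : U → ℂⁿ of the linear differential equation Y' = A(z)·Y forms a ℂ-vector space of dimension exactly n. -/

import Mathlib

open Filter Metric Set
open scoped Topology

namespace LinearODE

variable {E : Type*} [NormedAddCommGroup E] [NormedSpace ℂ E]

/-- `F` solves the linear equation `F' = L(z) F` at every point of `U`. -/
def IsSolutionOn (L : ℂ → E →L[ℂ] E) (F : ℂ → E) (U : Set ℂ) : Prop :=
  ∀ z ∈ U, HasDerivAt F (L z (F z)) z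

variable {L : ℂ → E →L[ℂ] E} {F G : ℂ → E} {U V : Set ℂ}

lemma IsSolutionOn.mono (hF : IsSolutionOn L F U) (hVU : V ⊆ U) : IsSolutionOn L F V :=
  fun z hz ↦ hF z (hVU hz)

lemma IsSolutionOn.sub (hF : IsSolutionOn L F U) (hG : IsSolutionOn L G U) :
    IsSolutionOn L (F - G) U :=
  fun z hz ↦ by simpa using (hF z hz).sub (hG z hz)

lemma IsSolutionOn.differentiableOn (hF : IsSolutionOn L F U) : DifferentiableOn ℂ F U :=
  fun z hz ↦ (hF z hz).differentiableAt.differentiableWithinAt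

/-- A primitive of `L f` vanishing at a point of a small ball is at most half as large as `f`. -/
lemma norm_le_half_of_hasDerivAt {c y z : ℂ} {r M C : ℝ} {f g : ℂ → E}
    (hg : ∀ z ∈ ball c r, HasDerivAt g (L z (f z)) z) (hy : y ∈ ball c r) (hgy : g y = 0)
    (hL : ∀ z ∈ ball c r, ‖L z‖ ≤ M) (hMr : M * (2 * r) ≤ 1 / 2)
    (hf : ∀ z ∈ ball c r, ‖f z‖ ≤ C) (hz : z ∈ ball c r) : ‖g z‖ ≤ C / 2 := by
  have hM : 0 ≤ M := (norm_nonneg _).trans (hL y hy)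
  have hC : 0 ≤ C := (norm_nonneg _).trans (hf y hy)
  have hmvt := (convex_ball c r).norm_image_sub_le_of_norm_hasDerivWithin_le (C := M * C)
    (fun x hx ↦ (hg x hx).hasDerivWithinAt)
    (fun x hx ↦ ((L x).le_opNorm _).trans (mul_le_mul (hL x hx) (hf x hx) (norm_nonneg _) hM))
    hy hz
  have hzy : ‖z - y‖ ≤ 2 * r := by
    have h1 := dist_triangle_right z y c
    rw [mem_ball] at hy hz
    rw [← dist_eq_norm]
    linarith
  rw [hgy, sub_zero] at hmvt
  nlinarith [mul_le_mul_of_nonneg_left hzy (mul_nonneg hM hC)]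

lemma exists_ball_norm_le (hU : IsOpen U) (hL : ContinuousOn L U) {c : ℂ} (hc : c ∈ U) :
    ∃ r > 0, ∃ M, ball c r ⊆ U ∧ (∀ z ∈ ball c r, ‖L z‖ ≤ M) ∧ M * (2 * r) ≤ 1 / 2 := by
  have hM : 0 < ‖L c‖ + 1 := by positivity
  have hev : ∀ᶠ z in 𝓝 c, z ∈ U ∧ ‖L z‖ < ‖L c‖ + 1 :=
    (hU.eventually_mem hc).and
      ((hL.continuousAt (hU.mem_nhds hc)).norm.eventually_lt_const (lt_add_one _))
  obtain ⟨ε, hε, hball⟩ := Metric.eventually_nhds_iff_ball.1 hev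
  refine ⟨min ε (1 / (4 * (‖L c‖ + 1))), lt_min hε (by positivity), ‖L c‖ + 1,
    fun z hz ↦ (hball z (ball_subset_ball (min_le_left _ _) hz)).1,
    fun z hz ↦ (hball z (ball_subset_ball (min_le_left _ _) hz)).2.le, ?_⟩
  calc (‖L c‖ + 1) * (2 * min ε (1 / (4 * (‖L c‖ + 1))))
      ≤ (‖L c‖ + 1) * (2 * (1 / (4 * (‖L c‖ + 1)))) := by gcongr; exact min_le_right _ _
    _ = 1 / 2 := by field_simp; norm_num

lemma IsSolutionOn.eventuallyEq_zero (hF : IsSolutionOn L F U) (hU : IsOpen U)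
    (hL : ContinuousOn L U) {y : ℂ} (hy : y ∈ U) (hFy : F y = 0) : F =ᶠ[𝓝 y] 0 := by
  have hbound : ∀ᶠ z in 𝓝 y, z ∈ U ∧ ‖F z‖ < 1 :=
    (hU.eventually_mem hy).and ((hF y hy).continuousAt.norm.eventually_lt_const (by simp [hFy]))
  obtain ⟨ε, hε, hball⟩ := Metric.eventually_nhds_iff_ball.1 hbound
  obtain ⟨r, hr, M, hrU, hM, hMr⟩ := exists_ball_norm_le (isOpen_ball (x := y) (ε := ε))
    (hL.mono fun z hz ↦ (hball z hz).1) (mem_ball_self hε)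
  have hpow : ∀ k : ℕ, ∀ z ∈ ball y r, ‖F z‖ ≤ (1 / 2) ^ k := by
    intro k
    induction k with
    | zero => exact fun z hz ↦ by simpa using (hball z (hrU hz)).2.le
    | succ k ih =>
      intro z hz
      have := norm_le_half_of_hasDerivAt (fun z hz ↦ hF z (hball z (hrU hz)).1)
        (mem_ball_self hr) hFy hM hMr ih hz
      rw [pow_succ]
      linarith
  filter_upwards [ball_mem_nhds y hr] with z hz
  have hlim := tendsto_pow_atTop_nhds_zero_of_lt_one (r := (1 / 2 : ℝ)) (by norm_num) (by norm_num)
  exact norm_le_zero_iff.1 (ge_of_tendsto' hlim fun k ↦ hpow k z hz)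

/-- A family of balls covering `U` with local solution operators: `S i y v` is the solution on the
`i`-th ball taking the value `v` at `y`. -/
structure LocalSolutions (L : ℂ → E →L[ℂ] E) (U : Set ℂ) where
  r : U → ℝ
  r_pos : ∀ i : U, 0 < r i
  ball_subset : ∀ i : U, ball (i : ℂ) (r i) ⊆ U
  S : U → ℂ → E → ℂ → E
  S_self : ∀ i : U, ∀ y ∈ ball (i : ℂ) (r i), ∀ v, S i y v y = v
  isSolutionOn : ∀ i : U, ∀ y ∈ ball (i : ℂ) (r i), ∀ v, IsSolutionOn L (S i y v) (ball i (r i))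

namespace LocalSolutions

variable (P : LocalSolutions L U)

/-- The chart domain attached to a point of `U`. -/
def chart (i : U) : Set ℂ := ball i (P.r i)

lemma isOpen_chart (i : U) : IsOpen (P.chart i) := isOpen_ball

lemma mem_chart_self (i : U) : (i : ℂ) ∈ P.chart i := mem_ball_self (P.r_pos i)

lemma isPreconnected_chart_inter (i j : U) : IsPreconnected (P.chart i ∩ P.chart j) :=
  ((convex_ball _ _).inter (convex_ball _ _)).isPreconnected

end LocalSolutions

variable [CompleteSpace E]

/-- Uniqueness: solutions on a connected open set agree once they agree at one point. -/
lemma IsSolutionOn.eqOn (hF : IsSolutionOn L F U) (hG : IsSolutionOn L G U) (hU : IsOpen U)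
    (hUc : IsPreconnected U) (hL : ContinuousOn L U) {y : ℂ} (hy : y ∈ U) (hFG : F y = G y) :
    EqOn F G U := by
  have hsub := hF.sub hG
  have hzero := (hsub.differentiableOn.analyticOnNhd
    hU).eqOn_zero_of_preconnected_of_eventuallyEq_zero hUc hy (hsub.eventuallyEq_zero hU hL hy (by simp [hFG]))
  exact fun z hz ↦ sub_eq_zero.1 (hzero hz)

/-- Existence on a small ball, with initial value prescribed at any point of the ball: the solution
is the sum of the iterated primitives `D (k + 1) = ∫ L (D k)`. -/
lemma exists_isSolutionOn_ball {c y : ℂ} {r M : ℝ} (hL : DifferentiableOn ℂ L (ball c r))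
    (hM : ∀ z ∈ ball c r, ‖L z‖ ≤ M) (hMr : M * (2 * r) ≤ 1 / 2) (hy : y ∈ ball c r) (v : E) :
    ∃ F, F y = v ∧ IsSolutionOn L F (ball c r) := by
  have hprim (f : ℂ → E) : ∃ g : ℂ → E, DifferentiableOn ℂ f (ball c r) →
      g y = 0 ∧ ∀ z ∈ ball c r, HasDerivAt g (L z (f z)) z := by
    by_cases hf : DifferentiableOn ℂ f (ball c r)
    · obtain ⟨g, hg⟩ := (hL.clm_apply hf).isExactOn_ball.with_val_at y 0
      exact ⟨g, fun _ ↦ hg⟩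
    · exact ⟨0, fun h ↦ (hf h).elim⟩
  choose P hP using hprim
  let D : ℕ → ℂ → E := fun k ↦ P^[k] fun _ ↦ v
  have hD_succ (k : ℕ) : D (k + 1) = P (D k) := Function.iterate_succ_apply' P k _
  have hD_diff (k : ℕ) : DifferentiableOn ℂ (D k) (ball c r) := by
    induction k with
    | zero => exact differentiableOn_const v
    | succ k ih =>
      rw [hD_succ]
      exact fun z hz ↦ ((hP _ ih).2 z hz).differentiableAt.differentiableWithinAt
  have hD_deriv (k : ℕ) : ∀ z ∈ ball c r, HasDerivAt (D (k + 1)) (L z (D k z)) z :=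
    hD_succ k ▸ (hP _ (hD_diff k)).2
  have hD_y (k : ℕ) : D (k + 1) y = 0 := hD_succ k ▸ (hP _ (hD_diff k)).1
  have hD_norm (k : ℕ) : ∀ z ∈ ball c r, ‖D k z‖ ≤ ‖v‖ * (1 / 2) ^ k := by
    induction k with
    | zero => exact fun z _ ↦ by simp [D]
    | succ k ih =>
      intro z hz
      have := norm_le_half_of_hasDerivAt (hD_deriv k) hy (hD_y k) hM hMr ih hz
      rw [pow_succ]
      linarith
  have hu : Summable fun k : ℕ ↦ ‖v‖ * (1 / 2) ^ k := summable_geometric_two.mul_left _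
  have hD_sum (z) (hz : z ∈ ball c r) : Summable fun k ↦ D k z :=
    .of_norm_bounded hu fun k ↦ hD_norm k z hz
  refine ⟨fun z ↦ ∑' k, D k z, ?_, fun z hz ↦ ?_⟩
  · change ∑' k, D k y = v
    rw [(hD_sum y hy).tsum_eq_zero_add]
    simp [hD_y, D]
  · have hdiff := Complex.differentiableOn_tsum_of_summable_norm hu hD_diff isOpen_ball
      fun k w hw ↦ hD_norm k w hw
    have hsum := Complex.hasSum_deriv_of_summable_norm hu hD_diff isOpen_ball
      (fun k w hw ↦ hD_norm k w hw) hz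
    have hderiv : deriv (fun w ↦ ∑' k, D k w) z = L z (∑' k, D k z) := by
      rw [← hsum.tsum_eq, hsum.summable.tsum_eq_zero_add, (L z).map_tsum (hD_sum z hz)]
      have hD_zero : deriv (D 0) z = 0 := deriv_const z v
      simp [hD_zero, (hD_deriv _ z hz).deriv]
    have hda := (hdiff.differentiableAt (isOpen_ball.mem_nhds hz)).hasDerivAt
    rwa [hderiv] at hda

/-- Around every point of `U` there is a ball in `U` on which every initial value problem is
solvable. -/
lemma exists_ball_forall_exists_isSolutionOn (hU : IsOpen U) (hL : DifferentiableOn ℂ L U)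
    {c : ℂ} (hc : c ∈ U) :
    ∃ r > 0, ball c r ⊆ U ∧
      ∀ y ∈ ball c r, ∀ v, ∃ F, F y = v ∧ IsSolutionOn L F (ball c r) := by
  obtain ⟨r, hr, M, hrU, hM, hMr⟩ := exists_ball_norm_le hU hL.continuousOn hc
  exact ⟨r, hr, hrU, fun y hy v ↦ exists_isSolutionOn_ball (hL.mono hrU) hM hMr hy v⟩

lemma exists_localSolutions (hU : IsOpen U) (hL : DifferentiableOn ℂ L U) :
    Nonempty (LocalSolutions L U) := by
  choose r hr hrU hS using fun i : U ↦ exists_ball_forall_exists_isSolutionOn hU hL i.2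
  choose! S hS_self hS using hS
  exact ⟨⟨r, hr, hrU, S, hS_self, hS⟩⟩

namespace LocalSolutions

variable (P : LocalSolutions L U)

lemma eqOn_S (hL : ContinuousOn L U) {i : U} (hF : IsSolutionOn L F (P.chart i))
    {x : ℂ} (hx : x ∈ P.chart i) : EqOn (P.S i x (F x)) F (P.chart i) :=
  (P.isSolutionOn i x hx _).eqOn hF isOpen_ball (convex_ball _ _).isPreconnected
    (hL.mono (P.ball_subset i)) hx (P.S_self i x hx _)

/-- Changing base point does not change the solution. -/
lemma S_S (hL : ContinuousOn L U) {i : U} {x y z : ℂ} (hx : x ∈ P.chart i) (hy : y ∈ P.chart i)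
    (hz : z ∈ P.chart i) (v : E) : P.S i x (P.S i y v x) z = P.S i y v z :=
  P.eqOn_S hL (P.isSolutionOn i y hy v) hx hz

/-- Continuing the germ of a solution from the chart `i` to the chart `j` does not depend on the
point of `P.chart i ∩ P.chart j` where it is transferred. -/
lemma S_apply_eq (hL : ContinuousOn L U) {i j : U} (hF : IsSolutionOn L F (P.chart i)) {x y z : ℂ}
    (hx : x ∈ P.chart i ∩ P.chart j) (hy : y ∈ P.chart i ∩ P.chart j) (hz : z ∈ P.chart j) :
    P.S j x (F x) z = P.S j y (F y) z := by
  have hxS : IsSolutionOn L (P.S j x (F x)) (P.chart j) := P.isSolutionOn j x hx.2 _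
  have hyF : P.S j x (F x) y = F y :=
    (hxS.mono inter_subset_right).eqOn (hF.mono inter_subset_left)
      ((P.isOpen_chart i).inter (P.isOpen_chart j)) (P.isPreconnected_chart_inter i j)
      (hL.mono (inter_subset_left.trans (P.ball_subset i))) hx (P.S_self j x hx.2 _) hy
  rw [← hyF, P.S_S hL hy.2 hx.2 hz]

/-- The bundle of germs of solutions: a germ is recorded in the chart `i` by the value at the centre
of its continuation, so that the transition functions are locally constant. -/
noncomputable def bundleCore (hL : ContinuousOn L U) :
    FiberBundleCore U U (WithDiscreteTopology E) where
  baseSet i := Subtype.val ⁻¹' P.chart i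
  isOpen_baseSet i := (P.isOpen_chart i).preimage continuous_subtype_val
  indexAt x := x
  mem_baseSet_at x := P.mem_chart_self x
  coordChange i j x v := .toTopology ⊥ (P.S j x (P.S i i v.ofTopology x) j)
  coordChange_self i x hx v := by
    rw [P.S_S hL hx (P.mem_chart_self i) (P.mem_chart_self i),
      P.S_self i i (P.mem_chart_self i), WithTopology.toTopology_ofTopology]
  coordChange_comp i j k x hx v := by
    rw [WithTopology.ofTopology_toTopology, P.S_S hL (P.mem_chart_self j) hx.1.2 hx.1.2,
      P.S_self j x hx.1.2]
  continuousOn_coordChange i j := by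
    rintro ⟨x, v⟩ ⟨hx, -⟩
    refine continuousWithinAt_const.congr_of_eventuallyEq
      (f := fun _ ↦ WithTopology.toTopology ⊥ (P.S j x (P.S i i v.ofTopology x) j)) ?_ rfl
    have hv : ∀ᶠ p : U × WithDiscreteTopology E in 𝓝 (x, v), p.2 = v :=
      continuousAt_snd.eventually_mem (s := {v}) (by simp [nhds_discrete])
    filter_upwards [self_mem_nhdsWithin, nhdsWithin_le_nhds hv] with p hp hpv
    rw [hpv, P.S_apply_eq hL (P.isSolutionOn i i (P.mem_chart_self i) _) hp.1 hx
      (P.mem_chart_self j)]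

end LocalSolutions

/-- Existence on a simply connected open set: lift the identity through the covering space of
germs of solutions. -/
lemma exists_isSolutionOn (hU : IsOpen U) [SimplyConnectedSpace U] (hL : DifferentiableOn ℂ L U)
    {y : ℂ} (hy : y ∈ U) (v : E) : ∃ F, F y = v ∧ IsSolutionOn L F U := by
  classical
  have hLc := hL.continuousOn
  obtain ⟨P⟩ := exists_localSolutions hU hL
  let Z := P.bundleCore hLc
  have : LocallyPathConnectedSpace U := hU.locallyPathConnectedSpace
  have hcov : IsCoveringMap Z.proj := FiberBundle.isCoveringMap (E := Z.Fiber)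
  obtain ⟨s, ⟨hs_y, hs⟩, -⟩ := hcov.existsUnique_continuousMap_lifts (ContinuousMap.id U) ⟨y, hy⟩
    ⟨⟨y, hy⟩, .toTopology ⊥ v⟩ rfl
  have hproj (x : U) : (s x).proj = x := congrFun hs x
  let val : Z.TotalSpace → E := fun p ↦ WithTopology.ofTopology (t := ⊥) p.snd
  let F : ℂ → E := fun z ↦ if hz : z ∈ U then val (s ⟨z, hz⟩) else 0
  have hF (x : U) : F x = val (s x) := dif_pos x.2
  refine ⟨F, (hF ⟨y, hy⟩).trans (congrArg val hs_y), fun z hz ↦ ?_⟩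
  let i : U := ⟨z, hz⟩
  have hcoord (x : U) :
      (Z.localTriv i (s x)).2 = WithTopology.toTopology ⊥ (P.S i x (F x) i) := by
    change WithTopology.toTopology ⊥
      (P.S i (s x).proj (P.S (s x).proj (s x).proj (val (s x)) (s x).proj) i) = _
    rw [P.S_self _ _ (P.mem_chart_self _), hproj, hF]
  have hcont : ContinuousAt (fun x ↦ (Z.localTriv i (s x)).2) i :=
    continuous_snd.continuousAt.comp (((Z.localTriv i).continuousAt (by
      rw [(Z.localTriv i).mem_source]
      change ((s i).proj : ℂ) ∈ P.chart i
      rw [hproj]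
      exact P.mem_chart_self i)).comp s.continuous.continuousAt)
  have hconst : ∀ᶠ x : U in 𝓝 i, P.S i x (F x) i = F z := by
    have hev := hcont.eventually_mem (s := {(Z.localTriv i (s i)).2}) (by simp [nhds_discrete])
    filter_upwards [hev] with x hx
    have hx' := (hcoord x).symm.trans ((mem_singleton_iff.1 hx).trans (hcoord i))
    have := WithTopology.toTopology_injective ⊥ hx'
    rw [this, P.S_self i i (P.mem_chart_self i)]
  have hsol : F =ᶠ[𝓝 z] P.S i z (F z) := by
    rw [EventuallyEq, ← map_nhds_subtype_coe_eq_nhds hz (hU.mem_nhds hz), eventually_map]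
    have hchart : ∀ᶠ x : U in 𝓝 i, (x : ℂ) ∈ P.chart i :=
      continuous_subtype_val.continuousAt.eventually_mem
        ((P.isOpen_chart i).mem_nhds (P.mem_chart_self i))
    filter_upwards [hconst, hchart] with x hx hxi
    have hS := P.S_S hLc (P.mem_chart_self i) hxi hxi (F x)
    rw [hx, P.S_self i x hxi] at hS
    exact hS.symm
  have hd := P.isSolutionOn i z (P.mem_chart_self i) (F z) z (P.mem_chart_self i)
  rw [P.S_self i z (P.mem_chart_self i)] at hd
  exact hd.congr_of_eventuallyEq hsol

end LinearODE

theorem solution_space_linear_ode_dim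
    (n : ℕ) (U : Set ℂ) (hU : IsOpen U) (hconn : IsConnected U)
    (hsc : SimplyConnectedSpace U)
    (A : ℂ → Matrix (Fin n) (Fin n) ℂ)
    (hA : ∀ i j, DifferentiableOn ℂ (fun z => A z i j) U) :
    ∃ S : Submodule ℂ (U → (Fin n → ℂ)),
      (↑S = {Y : U → (Fin n → ℂ) |
        ∃ F : ℂ → (Fin n → ℂ),
          (∀ z : U, F z = Y z) ∧
          ∀ z ∈ U, HasDerivAt F ((A z).mulVec (F z)) z}) ∧
      Module.rank ℂ S = n := by
  let Φ : (Fin n → Fin n → ℂ) →ₗ[ℂ] (Fin n → ℂ) →L[ℂ] (Fin n → ℂ) :=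
    LinearMap.toContinuousLinearMap.toLinearMap ∘ₗ Matrix.toLin'.toLinearMap ∘ₗ
      (Matrix.ofLinearEquiv ℂ).toLinearMap
  let L : ℂ → (Fin n → ℂ) →L[ℂ] (Fin n → ℂ) := fun z ↦ Φ (A z)
  have hL : DifferentiableOn ℂ L U :=
    Φ.toContinuousLinearMap.differentiable.comp_differentiableOn
      (differentiableOn_pi.2 fun i ↦ differentiableOn_pi.2 fun j ↦ hA i j)
  obtain ⟨x₀, hx₀⟩ := hconn.nonempty
  let S : Submodule ℂ (U → (Fin n → ℂ)) :=
    { carrier := {Y | ∃ F : ℂ → (Fin n → ℂ), (∀ z : U, F z = Y z) ∧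
        ∀ z ∈ U, HasDerivAt F ((A z).mulVec (F z)) z}
      zero_mem' := ⟨0, fun _ ↦ rfl, fun z _ ↦ by simp⟩
      add_mem' := by
        rintro _ _ ⟨F, hFY, hF⟩ ⟨G, hGY, hG⟩
        exact ⟨F + G, fun z ↦ by simp [hFY, hGY], fun z hz ↦ by
          simpa [Matrix.mulVec_add] using (hF z hz).add (hG z hz)⟩
      smul_mem' := by
        rintro c _ ⟨F, hFY, hF⟩
        exact ⟨c • F, fun z ↦ by simp [hFY], fun z hz ↦ by
          simpa [Matrix.mulVec_smul] using (hF z hz).const_smul c⟩ }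
  refine ⟨S, rfl, ?_⟩
  let ev : S →ₗ[ℂ] (Fin n → ℂ) := LinearMap.proj (⟨x₀, hx₀⟩ : U) ∘ₗ S.subtype
  have hev : Function.Bijective ev := by
    constructor
    · rintro ⟨Y, F, hFY, hF⟩ ⟨Y', G, hGY, hG⟩ h
      have hx : F x₀ = G x₀ := (hFY ⟨x₀, hx₀⟩).trans (h.trans (hGY ⟨x₀, hx₀⟩).symm)
      have hF' : LinearODE.IsSolutionOn L F U := hF
      have heq := hF'.eqOn hG hU hconn.isPreconnected hL.continuousOn hx₀ hx
      exact Subtype.ext (funext fun z ↦ (hFY z).symm.trans ((heq z.2).trans (hGY z)))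
    · intro v
      obtain ⟨F, hFv, hF⟩ := LinearODE.exists_isSolutionOn hU hL hx₀ v
      exact ⟨⟨fun z ↦ F z, F, fun _ ↦ rfl, hF⟩, hFv⟩
  rw [(LinearEquiv.ofBijective ev hev).rank_eq, rank_fin_fun]
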